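/- Let l, k be coprime integers with 1 ≤ l < k and k ≥ 2, and set α = l/k. Among the rationals in [0,1] whose reduced denominator is strictly less than k, let α1 be the largest one smaller than α and α2 the smallest one larger than α. Let ε be a real number with 0 ≤ ε < min(α − α1, α2 − α). Then for every positive integer n there exist n step-function probability measures μ_1, ..., μ_n on [0,1] such that for every natural number m and every set A ⊆ [0,1] achievable with m cuts, if |μ_i(A) − l/k| ≤ ε for every i ∈ {1, ..., n}, then m ≥ 2·(k−1)·n/k − k (as real numbers). -/

import Mathlib

/-!
Bézout gives `q₁, p₁` with `l q₁ = p₁ k + 1` and `1 ≤ q₁ < k`; put `q₂ = k - q₁`, `p₂ = l - p₁`.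
Then `p₁ / q₁ < l / k < p₂ / q₂` and both denominators are `< k`, so the hypothesis on `ε` forces
every value within `ε` of `l / k` to lie strictly between `p₁ / q₁` and `p₂ / q₂`.

Cut `[0,1]` into equal cells. A group of `k` measures consists of `q₂` "plus" measures, each uniform
on `q₁` cells, and `q₁` "minus" measures, each uniform on `q₂` cells, placed so that plus and minus
cells alternate along the line. For a set `A` made with cuts, let `e` be the state (in `A` or not,
as `1` or `0`) at the cell boundaries, and for each cell let `X`, `Y` be the maximum and the minimum
of the state on the cell. The number of cuts in a cell with boundary states `e, e'` is at least
`2 X - e - e'` and at least `e + e' - 2 Y`. The first bound is used on plus cells and the second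
on minus cells, so the boundary states telescope. A plus measure has value `> p₁ / q₁`, so its
`X`-values sum to at least `p₁ + 1`; a minus measure has value `< p₂ / q₂`, so its `Y`-values sum to
at most `p₂ - 1`. Hence a group forces `2 q₂ (p₁ + 1) - 2 q₁ (p₂ - 1) = 2 (k - 1)` cuts, up to a
loss of `1` at the two ends of the line. With `n = g k + r`, there are `g` groups, and each of the
`r` remaining measures is uniform on a single cell of its own, which must contain a cut.

The lemmas `AchievableWithCuts.exists_count` (states and cuts through a counting function),
`plus_bound`, `minus_bound` (one cell) and `alternating_bound` (telescoping) carry the argument.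
-/

open MeasureTheory
open scoped ENNReal

/-- A step-function probability measure on `[0,1]`: a Borel probability measure on `ℝ`
that is absolutely continuous w.r.t. Lebesgue measure with a piecewise constant density
supported in `[0,1]`. -/
def IsStepMeasure (μ : Measure ℝ) : Prop :=
  IsProbabilityMeasure μ ∧
  ∃ (n : ℕ) (a b : Fin n → ℝ) (c : Fin n → ℝ≥0∞),
    (∀ i, 0 ≤ a i ∧ b i ≤ 1) ∧
    μ = volume.withDensity
      (fun x => ∑ i, Set.indicator (Set.Ico (a i) (b i)) (fun _ => c i) x)

/-- `A ⊆ [0,1]` is achievable with `m` cuts: there are points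
`0 = y_0 ≤ y_1 ≤ ... ≤ y_m ≤ y_{m+1} = 1` such that `A` is the union of some
subcollection of the `m+1` closed intervals determined by these points. -/
def AchievableWithCuts (m : ℕ) (A : Set ℝ) : Prop :=
  ∃ y : Fin (m + 2) → ℝ, Monotone y ∧ y 0 = 0 ∧ y (Fin.last (m + 1)) = 1 ∧
    ∃ S : Finset (Fin (m + 1)), A = ⋃ i ∈ S, Set.Icc (y i.castSucc) (y i.succ)

/-! ### Measures uniform on finitely many cells -/

/-- The cell number `j` when `[0,1]` is divided into `M` equal half-open cells. -/
def cell (M j : ℕ) : Set ℝ := Set.Ico ((j : ℝ) / M) (((j : ℝ) + 1) / M)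

/-- The measure that gives mass `1 / d` to each of the cells `pos 0, …, pos (d - 1)` and is uniform
on each of them. -/
noncomputable def cellMeasure (M d : ℕ) (pos : ℕ → ℕ) : Measure ℝ :=
  volume.withDensity (fun x => ∑ s : Fin d,
    Set.indicator (Set.Ico ((pos s : ℝ) / M) (((pos s : ℝ) + 1) / M))
      (fun _ => ENNReal.ofReal ((M : ℝ) / d)) x)

/-- The fraction of cell `j` occupied by `A`. -/
noncomputable def cellFrac (M : ℕ) (A : Set ℝ) (j : ℕ) : ℝ := M * volume.real (cell M j ∩ A)

lemma volume_real_cell (M j : ℕ) : volume.real (cell M j) = 1 / M := by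
  have h : ((j : ℝ) / M) ≤ (((j : ℝ) + 1) / M) := by gcongr; linarith
  rw [cell, Real.volume_real_Ico_of_le h]
  ring

lemma cellMeasure_apply (M d : ℕ) (pos : ℕ → ℕ) {A : Set ℝ} (hA : MeasurableSet A) :
    cellMeasure M d pos A =
      ∑ s : Fin d, ENNReal.ofReal ((M : ℝ) / d) * volume (cell M (pos s) ∩ A) := by
  rw [cellMeasure, withDensity_apply _ hA, lintegral_finsetSum]
  · refine Finset.sum_congr rfl fun s _ => ?_
    rw [lintegral_indicator measurableSet_Ico, lintegral_const, Measure.restrict_apply_univ,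
      Measure.restrict_apply measurableSet_Ico]
    rfl
  · intro s _
    exact measurable_const.indicator measurableSet_Ico

lemma cellMeasure_toReal (M d : ℕ) (hd : 0 < d) (pos : ℕ → ℕ) {A : Set ℝ} (hA : MeasurableSet A) :
    (d : ℝ) * (cellMeasure M d pos A).toReal = ∑ s ∈ Finset.range d, cellFrac M A (pos s) := by
  have hfin : ∀ j, volume (cell M j ∩ A) ≠ ⊤ := fun j =>
    ((measure_mono Set.inter_subset_left).trans_lt measure_Ico_lt_top).ne
  have hd' : (d : ℝ) ≠ 0 := by positivity
  rw [cellMeasure_apply M d pos hA, ENNReal.toReal_sum, Finset.mul_sum,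
    ← Fin.sum_univ_eq_sum_range (fun s => cellFrac M A (pos s))]
  · refine Finset.sum_congr rfl fun s _ => ?_
    rw [ENNReal.toReal_mul, ENNReal.toReal_ofReal (by positivity), cellFrac, Measure.real]
    field_simp
  · intro s _
    exact ENNReal.mul_ne_top ENNReal.ofReal_ne_top (hfin _)

lemma isStepMeasure_cellMeasure (M d : ℕ) (hM : 0 < M) (hd : 0 < d) (pos : ℕ → ℕ)
    (hpos : ∀ s < d, pos s < M) : IsStepMeasure (cellMeasure M d pos) := by
  have hM' : (0 : ℝ) < M := by exact_mod_cast hM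
  refine ⟨⟨?_⟩, d, _, _, _, fun i => ⟨?_, ?_⟩, rfl⟩
  · have h := cellMeasure_toReal M d hd pos MeasurableSet.univ
    have hd' : (d : ℝ) ≠ 0 := by positivity
    simp only [cellFrac, Set.inter_univ, volume_real_cell, mul_one_div_cancel hM'.ne',
      Finset.sum_const, Finset.card_range, nsmul_eq_mul] at h
    rw [← ENNReal.toReal_eq_one_iff]
    exact mul_left_cancel₀ hd' h
  · positivity
  · rw [div_le_one hM']
    exact_mod_cast hpos i i.2

/-! ### Cuts and states -/

/-- For a set `A` made with `m` cuts there is a monotone counting function `c` (the witness is the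
number of cut points `≤ x`) such that, off the finite set `F` of subdivision points, a point
`x ∈ [0,1)` lies in `A` exactly when `c x` belongs to a fixed set `S` of indices. -/
lemma AchievableWithCuts.exists_count {m : ℕ} {A : Set ℝ} (h : AchievableWithCuts m A) :
    MeasurableSet A ∧ ∃ (c : ℝ → ℕ) (S : Set ℕ) (F : Set ℝ), Monotone c ∧ c 1 = m ∧ F.Finite ∧
      (∀ x, 0 ≤ x → x < 1 → c x ∈ S → x ∈ A) ∧
      (∀ x, 0 ≤ x → x < 1 → x ∈ A → x ∉ F → c x ∈ S) := by
  classical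
  obtain ⟨y, hy, hy0, hy1, S, rfl⟩ := h
  refine ⟨Finset.measurableSet_biUnion _ fun i _ => measurableSet_Icc, ?_⟩
  set Y : ℕ → ℝ := fun i => if h : i < m + 2 then y ⟨i, h⟩ else 1 with hY
  have hYy : ∀ i (h : i < m + 2), Y i = y ⟨i, h⟩ := fun i h => by simp [hY, h]
  have hYmono : ∀ i j, i ≤ j → j < m + 2 → Y i ≤ Y j := by
    intro i j hij hj
    rw [hYy i (by omega), hYy j hj]
    exact hy (by simpa using hij)
  have hY0 : Y 0 = 0 := by rw [hYy 0 (by omega)]; exact hy0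
  have hYlast : Y (m + 1) = 1 := by rw [hYy (m + 1) (by omega)]; exact hy1
  set c : ℝ → ℕ := fun x => Nat.findGreatest (fun i => Y i ≤ x) m with hc
  have hcm : ∀ x, c x ≤ m := fun x => Nat.findGreatest_le m
  have hcY : ∀ x, 0 ≤ x → Y (c x) ≤ x := fun x hx =>
    Nat.findGreatest_spec (P := fun i => Y i ≤ x) (Nat.zero_le m) (by simpa [hY0] using hx)
  refine ⟨c, {i | ∃ h : i < m + 1, (⟨i, h⟩ : Fin (m + 1)) ∈ S}, Set.range y, ?_, ?_,
    Set.finite_range y, ?_, ?_⟩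
  · intro x x' hxx
    exact Nat.findGreatest_mono_left (fun i hi => le_trans hi hxx) m
  · refine le_antisymm (hcm 1) (Nat.le_findGreatest le_rfl ?_)
    rw [← hYlast]
    exact hYmono _ _ (by omega) (by omega)
  · rintro x hx0 hx1 ⟨h, hS⟩
    refine Set.mem_biUnion hS ⟨?_, ?_⟩
    · have := hcY x hx0
      rw [hYy _ (by omega)] at this
      exact this
    · change x ≤ y ⟨c x + 1, _⟩
      rw [← hYy (c x + 1) (by omega)]
      rcases (hcm x).eq_or_lt with he | hlt
      · rw [he, hYlast]; exact hx1.le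
      · exact (not_le.1 (Nat.findGreatest_is_greatest (P := fun i => Y i ≤ x)
          (Nat.lt_succ_self _) hlt)).le
  · intro x hx0 hx1 hxA hxF
    simp only [Set.mem_iUnion] at hxA
    obtain ⟨i, hiS, hix⟩ := hxA
    have hi1 : Y i ≤ x := by rw [hYy i (by omega)]; exact hix.1
    have hi2 : x < Y (i + 1) := by
      rw [hYy (i + 1) (by omega)]
      exact lt_of_le_of_ne hix.2 fun he => hxF ⟨_, he.symm⟩
    have hci : c x = i := by
      refine le_antisymm ?_ (Nat.le_findGreatest (by omega) hi1)
      by_contra hlt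
      have := hYmono (i + 1) (c x) (by omega) (by have := hcm x; omega)
      linarith [hcY x hx0]
    exact ⟨by rw [hci]; exact i.2, by simpa [hci] using hiS⟩

open Classical in
/-- The indicator of `S`, with integer values. -/
noncomputable def chi (S : Set ℕ) (i : ℕ) : ℤ := if i ∈ S then 1 else 0

open Classical in
/-- `1` if some point of cell `j` is in state "in", else `0`. -/
noncomputable def cellMax (M : ℕ) (c : ℝ → ℕ) (S : Set ℕ) (j : ℕ) : ℤ :=
  if ∃ x ∈ cell M j, c x ∈ S then 1 else 0

open Classical in
/-- `1` if all points of cell `j` are in state "in", else `0`. -/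
noncomputable def cellMin (M : ℕ) (c : ℝ → ℕ) (S : Set ℕ) (j : ℕ) : ℤ :=
  if ∀ x ∈ cell M j, c x ∈ S then 1 else 0

lemma chi_sub_le (S : Set ℕ) {u v : ℕ} (h : u ≤ v) :
    chi S v - chi S u ≤ (v : ℤ) - u ∧ chi S u - chi S v ≤ (v : ℤ) - u := by
  rcases h.eq_or_lt with rfl | h
  · simp
  · unfold chi
    constructor <;> split_ifs <;> omega

lemma chi_mem (S : Set ℕ) (u : ℕ) : 0 ≤ chi S u ∧ chi S u ≤ 1 := by
  unfold chi; split_ifs <;> simp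

lemma left_mem_cell {M : ℕ} (hM : 0 < M) (j : ℕ) : (j : ℝ) / M ∈ cell M j := by
  have hM' : (0 : ℝ) < M := by exact_mod_cast hM
  exact ⟨le_rfl, by gcongr; linarith⟩

lemma cell_bounds {M j : ℕ} (hM : 0 < M) (hj : j < M) {x : ℝ} (hx : x ∈ cell M j) :
    0 ≤ x ∧ x < 1 := by
  have hM' : (0 : ℝ) < M := by exact_mod_cast hM
  refine ⟨le_trans (by positivity) hx.1, hx.2.trans_le ?_⟩
  rw [div_le_one hM']
  exact_mod_cast hj

lemma plus_bound {M : ℕ} (hM : 0 < M) {c : ℝ → ℕ} (hc : Monotone c) (S : Set ℕ) (j : ℕ) :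
    2 * cellMax M c S j - chi S (c ((j : ℝ) / M)) - chi S (c (((j : ℝ) + 1) / M))
      ≤ (c (((j : ℝ) + 1) / M) : ℤ) - c ((j : ℝ) / M) := by
  have key : ∃ x ∈ cell M j, cellMax M c S j ≤ chi S (c x) := by
    unfold cellMax chi
    split_ifs with h
    · obtain ⟨x, hx, hxS⟩ := h
      exact ⟨x, hx, by simp [hxS]⟩
    · exact ⟨_, left_mem_cell hM j, by split_ifs <;> simp⟩
  obtain ⟨x, hx, hmax⟩ := key
  have h1 := (chi_sub_le S (hc hx.1)).1
  have h2 := (chi_sub_le S (hc hx.2.le)).2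
  linarith

lemma minus_bound {M : ℕ} (hM : 0 < M) {c : ℝ → ℕ} (hc : Monotone c) (S : Set ℕ) (j : ℕ) :
    chi S (c ((j : ℝ) / M)) + chi S (c (((j : ℝ) + 1) / M)) - 2 * cellMin M c S j
      ≤ (c (((j : ℝ) + 1) / M) : ℤ) - c ((j : ℝ) / M) := by
  have key : ∃ x ∈ cell M j, chi S (c x) ≤ cellMin M c S j := by
    unfold cellMin chi
    split_ifs with h
    · exact ⟨_, left_mem_cell hM j, by split_ifs <;> simp⟩
    · push Not at h
      obtain ⟨x, hx, hxS⟩ := h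
      exact ⟨x, hx, by simp [hxS]⟩
  obtain ⟨x, hx, hmin⟩ := key
  have h1 := (chi_sub_le S (hc hx.1)).2
  have h2 := (chi_sub_le S (hc hx.2.le)).1
  linarith

lemma cellMax_sub_cellMin_le {M : ℕ} (hM : 0 < M) {c : ℝ → ℕ} (hc : Monotone c) (S : Set ℕ) (j : ℕ) :
    cellMax M c S j - cellMin M c S j ≤ (c (((j : ℝ) + 1) / M) : ℤ) - c ((j : ℝ) / M) := by
  linarith [plus_bound hM hc S j, minus_bound hM hc S j]

lemma cellFrac_le {M : ℕ} (hM : 0 < M) {c : ℝ → ℕ} (S : Set ℕ)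
    {A F : Set ℝ} (hF : F.Finite)
    (hAc : ∀ x, 0 ≤ x → x < 1 → x ∈ A → x ∉ F → c x ∈ S) {j : ℕ} (hj : j < M) :
    cellFrac M A j ≤ cellMax M c S j := by
  have hM' : (0 : ℝ) < M := by exact_mod_cast hM
  unfold cellMax cellFrac
  split_ifs with h
  · have h1 : volume.real (cell M j ∩ A) ≤ volume.real (cell M j) :=
      measureReal_mono Set.inter_subset_left measure_Ico_lt_top.ne
    rw [volume_real_cell, le_div_iff₀' hM'] at h1
    simpa using h1
  · have hsub : cell M j ∩ A ⊆ F := by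
      rintro x ⟨hx, hxA⟩
      by_contra hxF
      exact h ⟨x, hx, hAc x (cell_bounds hM hj hx).1 (cell_bounds hM hj hx).2 hxA hxF⟩
    have h0 : volume (cell M j ∩ A) = 0 := measure_mono_null hsub (hF.measure_zero _)
    simp [Measure.real, h0]

lemma le_cellFrac {M : ℕ} (hM : 0 < M) {c : ℝ → ℕ} (S : Set ℕ)
    {A : Set ℝ} (hcA : ∀ x, 0 ≤ x → x < 1 → c x ∈ S → x ∈ A)
    {j : ℕ} (hj : j < M) :
    (cellMin M c S j : ℝ) ≤ cellFrac M A j := by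
  have hM' : (0 : ℝ) < M := by exact_mod_cast hM
  unfold cellMin cellFrac
  split_ifs with h
  · have hsub : cell M j ∩ A = cell M j := Set.inter_eq_left.2 fun x hx =>
      hcA x (cell_bounds hM hj hx).1 (cell_bounds hM hj hx).2 (h x hx)
    rw [hsub, volume_real_cell, mul_one_div_cancel hM'.ne']
    simp
  · simp only [Int.cast_zero]
    positivity

/-! ### Telescoping and summation over blocks -/

/-- Plus and minus cells alternate, so the boundary states `e` cancel except at the two ends. -/
lemma alternating_bound (C e X Y : ℕ → ℤ)
    (hX : ∀ j, 2 * X j - e j - e (j + 1) ≤ C (j + 1) - C j)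
    (hY : ∀ j, e j + e (j + 1) - 2 * Y j ≤ C (j + 1) - C j) (N : ℕ) :
    2 * (∑ t ∈ Finset.range N, X (2 * t)) - 2 * (∑ t ∈ Finset.range N, Y (2 * t + 1))
      - e 0 + e (2 * N) ≤ C (2 * N) - C 0 := by
  induction N with
  | zero => simp
  | succ N ih =>
    rw [Finset.sum_range_succ, Finset.sum_range_succ]
    have h1 := hX (2 * N)
    have h2 := hY (2 * N + 1)
    have h3 : 2 * (N + 1) = 2 * N + 1 + 1 := by ring
    rw [h3]
    linarith

lemma le_sum_blocks (f : ℕ → ℤ) (q b : ℕ) (B : ℤ) :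
    ∀ a, (∀ i < a, B ≤ ∑ s ∈ Finset.range q, f (i * q + s)) → b = a * q →
      a * B ≤ ∑ t ∈ Finset.range b, f t := by
  intro a
  induction a generalizing b with
  | zero => rintro - rfl; simp
  | succ a ih =>
    rintro h rfl
    rw [Nat.succ_mul, Finset.sum_range_add]
    have h1 := ih (a * q) (fun i hi => h i (by omega)) rfl
    have h2 := h a (by omega)
    push_cast
    linarith

/-- Bézout in the form of the two fractions `p₁ / q₁ < l / k < p₂ / q₂` with `q₁ + q₂ = k`. -/
lemma exists_neighbours (l k : ℕ) (hl : 1 ≤ l) (hlk : l < k) (hk : 2 ≤ k)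
    (hcop : Nat.Coprime l k) :
    ∃ q₁ q₂ p₁ p₂ : ℕ, 0 < q₁ ∧ 0 < q₂ ∧ q₁ + q₂ = k ∧ p₁ + p₂ = l ∧
      l * q₁ = p₁ * k + 1 ∧ l * q₂ + 1 = p₂ * k := by
  obtain ⟨q, hq, hmod⟩ := Nat.exists_mul_mod_eq_one_of_coprime hcop (by omega)
  have hdiv := Nat.div_add_mod (l * q) k
  rw [hmod] at hdiv
  have hq0 : 0 < q := by
    rcases Nat.eq_zero_or_pos q with rfl | h
    · simp at hmod
    · exact h
  set p := l * q / k with hp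
  have hpl : p ≤ l := by
    by_contra hlt
    have h1 : k * (l + 1) ≤ k * p := Nat.mul_le_mul_left k (by omega)
    nlinarith
  obtain ⟨q₂, rfl⟩ := Nat.exists_eq_add_of_lt hq
  obtain ⟨p₂, hp₂⟩ := Nat.exists_eq_add_of_le hpl
  refine ⟨q, q₂ + 1, p, p₂, hq0, by omega, by omega, by omega, by linarith, ?_⟩
  have : l * (q + q₂ + 1) = (p + p₂) * (q + q₂ + 1) := by rw [← hp₂]
  nlinarith

/-- Approximate version of the lower bound: with `α = l/k`, `α1` the
largest rational in `[0,1]` of reduced denominator `< k` below `α`, `α2` the smallest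
such rational above `α`, and `0 ≤ ε < min(α − α1, α2 − α)`, for every `n ≥ 1` there are
`n` step-function measures so that any set achievable with `m` cuts on which every
measure is within `ε` of `l/k` requires `m ≥ 2(k−1)n/k − k`. -/
theorem icd_approx_lower_bound
    (l k : ℕ) (hl : 1 ≤ l) (hlk : l < k) (hk : 2 ≤ k) (hcop : Nat.Coprime l k)
    (α α1 α2 : ℚ) (hα : α = (l : ℚ) / (k : ℚ))
    (hα1mem : 0 ≤ α1 ∧ α1 ≤ 1 ∧ α1.den < k)
    (hα1lt : α1 < α)
    (hα1max : ∀ q : ℚ, 0 ≤ q → q ≤ 1 → q.den < k → q < α → q ≤ α1)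
    (hα2mem : 0 ≤ α2 ∧ α2 ≤ 1 ∧ α2.den < k)
    (hα2gt : α < α2)
    (hα2min : ∀ q : ℚ, 0 ≤ q → q ≤ 1 → q.den < k → α < q → α2 ≤ q)
    (ε : ℝ) (hε0 : 0 ≤ ε)
    (hε : ε < min (((α - α1 : ℚ) : ℝ)) (((α2 - α : ℚ) : ℝ)))
    (n : ℕ) (hn : 0 < n) :
    ∃ μ : Fin n → Measure ℝ, (∀ i, IsStepMeasure (μ i)) ∧
      ∀ (m : ℕ) (A : Set ℝ), AchievableWithCuts m A →
        (∀ i, |(μ i A).toReal - (l : ℝ) / (k : ℝ)| ≤ ε) →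
        2 * ((k : ℝ) - 1) * (n : ℝ) / (k : ℝ) - (k : ℝ) ≤ (m : ℝ) := by
  obtain ⟨q₁, q₂, p₁, p₂, hq₁, hq₂, hqk, hpl, hlow, hupp⟩ :=
    exists_neighbours l k hl hlk hk hcop
  have hkQ : (0 : ℚ) < k := by positivity
  have hq₁Q : (0 : ℚ) < q₁ := by positivity
  have hq₂Q : (0 : ℚ) < q₂ := by positivity
  have hlowQ : (l : ℚ) * q₁ = p₁ * k + 1 := by exact_mod_cast hlow
  have huppQ : (l : ℚ) * q₂ + 1 = p₂ * k := by exact_mod_cast hupp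
  have hden : ∀ p q : ℕ, 0 < q → q < k → ((p : ℚ) / q).den < k := by
    intro p q hq hqk
    have h := Rat.den_dvd (p : ℤ) (q : ℤ)
    simp only [Rat.divInt_eq_div, Int.cast_natCast] at h
    exact (Nat.le_of_dvd hq (Int.natCast_dvd_natCast.1 h)).trans_lt hqk
  have hp₁α : (p₁ : ℚ) / q₁ < α := by
    rw [hα, div_lt_div_iff₀ hq₁Q hkQ]; linarith
  have hp₂α : α < (p₂ : ℚ) / q₂ := by
    rw [hα, div_lt_div_iff₀ hkQ hq₂Q]; linarith
  have hα₁ : (p₁ : ℚ) / q₁ ≤ α1 := by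
    refine hα1max _ (by positivity) ?_ (hden _ _ hq₁ (by omega)) hp₁α
    exact (hp₁α.trans (hα2gt.trans_le hα2mem.2.1)).le
  have hα₂ : α2 ≤ (p₂ : ℚ) / q₂ := by
    refine hα2min _ (by positivity) ?_ (hden _ _ hq₂ (by omega)) hp₂α
    rw [div_le_one hq₂Q]
    have : p₂ * k ≤ q₂ * k := by
      rw [← hupp]
      have : q₂ * (l + 1) ≤ q₂ * k := Nat.mul_le_mul_left _ hlk
      nlinarith
    exact_mod_cast Nat.le_of_mul_le_mul_right this (by omega)
  obtain ⟨hε1, hε2⟩ := lt_min_iff.1 hε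
  have hαR : (α : ℝ) = (l : ℝ) / k := by rw [hα]; push_cast; rfl
  have hα₁R : (p₁ : ℝ) / q₁ ≤ α1 := by
    have h : (((p₁ : ℚ) / q₁ : ℚ) : ℝ) ≤ α1 := Rat.cast_le.2 hα₁
    simpa using h
  have hα₂R : (α2 : ℝ) ≤ (p₂ : ℝ) / q₂ := by
    have h : (α2 : ℝ) ≤ (((p₂ : ℚ) / q₂ : ℚ) : ℝ) := Rat.cast_le.2 hα₂
    simpa using h
  have hα10 : (0 : ℝ) ≤ α1 := by exact_mod_cast hα1mem.1
  have hα21 : (α2 : ℝ) ≤ 1 := by exact_mod_cast hα2mem.2.1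
  push_cast at hε1 hε2
  rw [hαR] at hε1 hε2
  -- `g` full groups and `r` leftover measures; `N` plus cells and `N` minus cells
  obtain ⟨g, r, hr, hn'⟩ : ∃ g r, r < k ∧ n = g * k + r :=
    ⟨n / k, n % k, Nat.mod_lt _ (by omega), by rw [mul_comm]; exact (Nat.div_add_mod n k).symm⟩
  have hgk : g * k = g * q₂ + g * q₁ := by rw [← hqk]; ring
  set N := g * q₁ * q₂ with hN
  set M := 2 * N + r with hMdef
  have hM : 0 < M := by
    rcases Nat.eq_zero_or_pos g with rfl | hg
    · simp at hn'; omega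
    · have : 0 < N := by positivity
      omega
  have hplus_lt : ∀ i < g * q₂, ∀ s < q₁, 2 * (i * q₁ + s) < 2 * N := by
    intro i hi s hs
    have : (i + 1) * q₁ ≤ g * q₂ * q₁ := Nat.mul_le_mul_right _ hi
    have h2 : g * q₂ * q₁ = N := by rw [hN]; ring
    nlinarith
  have hminus_lt : ∀ i < g * q₁, ∀ s < q₂, 2 * (i * q₂ + s) + 1 < 2 * N := by
    intro i hi s hs
    have : (i + 1) * q₂ ≤ g * q₁ * q₂ := Nat.mul_le_mul_right _ hi
    have h3 : i * q₂ + s < N := by nlinarith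
    omega
  let μ : ℕ → Measure ℝ := fun i =>
    if i < g * q₂ then cellMeasure M q₁ (fun s => 2 * (i * q₁ + s))
    else if i < g * k then cellMeasure M q₂ (fun s => 2 * ((i - g * q₂) * q₂ + s) + 1)
    else cellMeasure M 1 (fun _ => 2 * N + (i - g * k))
  refine ⟨fun i => μ i, fun i => ?_, ?_⟩
  · have hi := i.2
    simp only [μ]
    split_ifs with h1 h2
    · exact isStepMeasure_cellMeasure M q₁ hM hq₁ _
        fun s hs => (hplus_lt _ h1 s hs).trans_le (by omega)
    · exact isStepMeasure_cellMeasure M q₂ hM hq₂ _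
        fun s hs => (hminus_lt _ (by omega) s hs).trans_le (by omega)
    · exact isStepMeasure_cellMeasure M 1 hM one_pos _ fun s hs => by omega
  intro m A hA hval
  obtain ⟨hAm, c, S, F, hc, hc1, hF, hcA, hAc⟩ := hA.exists_count
  have hvals : ∀ i < n, (α1 : ℝ) < (μ i A).toReal ∧ (μ i A).toReal < α2 := by
    intro i hi
    have h := abs_le.1 (hval ⟨i, hi⟩)
    simp only at h
    constructor <;> linarith [h.1, h.2]
  have hup : ∀ j < M, cellFrac M A j ≤ cellMax M c S j := fun j hj => cellFrac_le hM S hF hAc hj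
  have hlo : ∀ j < M, (cellMin M c S j : ℝ) ≤ cellFrac M A j := fun j hj => le_cellFrac hM S hcA hj
  have hplus : ∀ i < g * q₂,
      (p₁ : ℤ) + 1 ≤ ∑ s ∈ Finset.range q₁, cellMax M c S (2 * (i * q₁ + s)) := by
    intro i hi
    have hv := (hvals i (by omega)).1
    simp only [μ, if_pos hi] at hv
    have hs := cellMeasure_toReal M q₁ hq₁ (fun s => 2 * (i * q₁ + s)) hAm
    have hq : (0 : ℝ) < q₁ := by exact_mod_cast hq₁
    have hle : ∑ s ∈ Finset.range q₁, cellFrac M A (2 * (i * q₁ + s)) ≤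
        ∑ s ∈ Finset.range q₁, (cellMax M c S (2 * (i * q₁ + s)) : ℝ) :=
      Finset.sum_le_sum fun s hs => hup _ ((hplus_lt i hi s (Finset.mem_range.1 hs)).trans_le
        (by omega))
    have hlt := (div_lt_iff₀' hq).1 (hα₁R.trans_lt hv)
    rw [hs] at hlt
    have : (p₁ : ℝ) < ∑ s ∈ Finset.range q₁, (cellMax M c S (2 * (i * q₁ + s)) : ℝ) :=
      hlt.trans_le hle
    exact_mod_cast this
  have hminus : ∀ i < g * q₁,
      -((p₂ : ℤ) - 1) ≤ ∑ s ∈ Finset.range q₂, -cellMin M c S (2 * (i * q₂ + s) + 1) := by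
    intro i hi
    have hv := (hvals (g * q₂ + i) (by omega)).2
    simp only [μ, if_neg (show ¬ g * q₂ + i < g * q₂ by omega),
      if_pos (show g * q₂ + i < g * k by omega), Nat.add_sub_cancel_left] at hv
    have hs := cellMeasure_toReal M q₂ hq₂ (fun s => 2 * (i * q₂ + s) + 1) hAm
    have hq : (0 : ℝ) < q₂ := by exact_mod_cast hq₂
    have hle : ∑ s ∈ Finset.range q₂, (cellMin M c S (2 * (i * q₂ + s) + 1) : ℝ) ≤
        ∑ s ∈ Finset.range q₂, cellFrac M A (2 * (i * q₂ + s) + 1) :=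
      Finset.sum_le_sum fun s hs => hlo _ ((hminus_lt i hi s (Finset.mem_range.1 hs)).trans_le
        (by omega))
    have hlt := (lt_div_iff₀' hq).1 (hv.trans_le hα₂R)
    rw [hs] at hlt
    have : ∑ s ∈ Finset.range q₂, (cellMin M c S (2 * (i * q₂ + s) + 1) : ℝ) < p₂ :=
      hle.trans_lt hlt
    have h2 : ∑ s ∈ Finset.range q₂, cellMin M c S (2 * (i * q₂ + s) + 1) < p₂ := by
      exact_mod_cast this
    rw [Finset.sum_neg_distrib]
    omega
  have hrest : ∀ s < r, 1 ≤ cellMax M c S (2 * N + s) - cellMin M c S (2 * N + s) := by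
    intro i hi
    have hv := hvals (g * k + i) (by omega)
    simp only [μ, if_neg (show ¬ g * k + i < g * q₂ by omega),
      if_neg (show ¬ g * k + i < g * k by omega), Nat.add_sub_cancel_left] at hv
    have hs := cellMeasure_toReal M 1 one_pos (fun _ => 2 * N + i) hAm
    simp only [Nat.cast_one, one_mul, Finset.range_one, Finset.sum_singleton] at hs
    rw [hs] at hv
    have h1 : (0 : ℝ) < cellMax M c S (2 * N + i) :=
      (hα10.trans_lt hv.1).trans_le (hup _ (by omega))
    have h2 : (cellMin M c S (2 * N + i) : ℝ) < 1 :=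
      (hlo _ (by omega)).trans_lt (hv.2.trans_le hα21)
    have h1' : 0 < cellMax M c S (2 * N + i) := by exact_mod_cast h1
    have h2' : cellMin M c S (2 * N + i) < 1 := by exact_mod_cast h2
    omega
  set C : ℕ → ℤ := fun j => (c ((j : ℝ) / M) : ℤ) with hC
  set e : ℕ → ℤ := fun j => chi S (c ((j : ℝ) / M)) with he
  have halt := alternating_bound C e (cellMax M c S) (cellMin M c S)
    (fun j => by simpa [hC, he] using plus_bound hM hc S j)
    (fun j => by simpa [hC, he] using minus_bound hM hc S j) N
  have hsumX := le_sum_blocks (fun t => cellMax M c S (2 * t)) q₁ N _ (g * q₂) hplus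
    (by rw [hN]; ring)
  have hsumY := le_sum_blocks (fun t => -cellMin M c S (2 * t + 1)) q₂ N _ (g * q₁) hminus
    (by rw [hN])
  rw [Finset.sum_neg_distrib] at hsumY
  have htail : ∀ s ≤ r, (s : ℤ) ≤ C (2 * N + s) - C (2 * N) := by
    intro s
    induction s with
    | zero => simp
    | succ s ih =>
      intro hs
      have h1 := ih (by omega)
      have h2 := hrest s (by omega)
      have h3 : cellMax M c S (2 * N + s) - cellMin M c S (2 * N + s) ≤
          C (2 * N + (s + 1)) - C (2 * N + s) := by
        simpa [hC, add_assoc] using cellMax_sub_cellMin_le hM hc S (2 * N + s)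
      push_cast
      linarith
  have hend : C (2 * N + r) = m := by
    have : (M : ℝ) ≠ 0 := by positivity
    simp only [hC]
    rw [← hMdef, div_self this, hc1]
  have htail' := htail r le_rfl
  rw [hend] at htail'
  have hC0 : 0 ≤ C 0 := by simp [hC]
  have he0 : e 0 ≤ 1 := (chi_mem S _).2
  have heN : 0 ≤ e (2 * N) := (chi_mem S _).1
  -- the determinant identity `q₁ p₂ - q₂ p₁ = 1` turns the group count into `2 (k - 1)`
  have hdet : (q₁ : ℤ) * p₂ - q₂ * p₁ = 1 := by
    have h1 : (l : ℤ) * q₁ = p₁ * k + 1 := by exact_mod_cast hlow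
    have h2 : (l : ℤ) = p₁ + p₂ := by exact_mod_cast hpl.symm
    have h3 : (k : ℤ) = q₁ + q₂ := by exact_mod_cast hqk.symm
    rw [h2, h3] at h1
    linarith
  have hmain : 2 * ((k : ℤ) - 1) * g + r - 1 ≤ m := by
    have h3 : (k : ℤ) = q₁ + q₂ := by exact_mod_cast hqk.symm
    have h4 : (g : ℤ) * (q₁ * p₂ - q₂ * p₁) = g := by rw [hdet, mul_one]
    push_cast at hsumX hsumY
    rw [h3]
    linarith
  have hmainR : 2 * ((k : ℝ) - 1) * g + r - 1 ≤ m := by exact_mod_cast hmain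
  have hkR : (2 : ℝ) ≤ k := by exact_mod_cast hk
  have hrR : (r : ℝ) ≤ k := by exact_mod_cast hr.le
  have hr0 : (0 : ℝ) ≤ r := by positivity
  refine le_trans ?_ hmainR
  rw [hn', sub_le_iff_le_add, div_le_iff₀ (by linarith)]
  push_cast
  nlinarith
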